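/- arXiv:2005.08201 — 2 statements merged into one kernel-verified Lean document; each statement's English description precedes it below -/
import Mathlib

section
/- Let F_q be a finite field of odd characteristic p with q = p^n elements. If q ≡ -1 (mod 16) or q ≡ -7 (mod 16), then the group algebra F_q[QD_32] is isomorphic as an F_q-algebra to F_q ⊕ F_q ⊕ F_q ⊕ F_q ⊕ M(2,F_q)^3 ⊕ M(2,F_{q^2})^2, where F_{q^2} is the field with q^2 elements. -/
/-- Relations for the quasidihedral group `QD_{2^k}`:
`a^(2^(k-1)) = 1`, `x^2 = 1`, `x * a * x = a^(2^(k-2)-1)`. -/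
def qdRels (k : ℕ) : Set (FreeGroup (Fin 2)) :=
  {FreeGroup.of 0 ^ (2 ^ (k - 1)), FreeGroup.of 1 ^ 2,
    FreeGroup.of 1 * FreeGroup.of 0 * FreeGroup.of 1 * (FreeGroup.of 0 ^ (2 ^ (k - 2) - 1))⁻¹}

/-- The quasidihedral group of order 32: `⟨a, x | a^16 = x^2 = 1, x a x = a^7⟩`. -/
def QD32 : Type := PresentedGroup (qdRels 5)

instance : Group QD32 := inferInstanceAs (Group (PresentedGroup (qdRels 5)))

open Polynomial

namespace QDAux

def ga : QD32 := PresentedGroup.of (rels := qdRels 5) 0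
def gx : QD32 := PresentedGroup.of (rels := qdRels 5) 1

lemma ga_pow : ga ^ 16 = 1 := by
  have h : (PresentedGroup.mk (qdRels 5)) (FreeGroup.of 0 ^ (2 ^ (5 - 1))) = 1 :=
    PresentedGroup.one_of_mem (by simp [qdRels])
  rw [map_pow] at h
  exact h

lemma gx_pow : gx ^ 2 = 1 := by
  have h : (PresentedGroup.mk (qdRels 5)) (FreeGroup.of 1 ^ 2) = 1 :=
    PresentedGroup.one_of_mem (by simp [qdRels])
  rw [map_pow] at h
  exact h

lemma gxax : gx * ga * gx = ga ^ 7 := by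
  have h : (PresentedGroup.mk (qdRels 5)) (FreeGroup.of 1 * FreeGroup.of 0 * FreeGroup.of 1 *
      (FreeGroup.of 0 ^ (2 ^ (5 - 2) - 1))⁻¹) = 1 :=
    PresentedGroup.one_of_mem (by simp [qdRels])
  rw [map_mul, map_inv, mul_inv_eq_one, map_mul, map_mul, map_pow] at h
  exact h

lemma gxa : gx * ga = ga ^ 7 * gx := by
  rw [← gxax, mul_assoc (gx * ga), ← pow_two, gx_pow, mul_one]

lemma gxak (k : ℕ) : gx * ga ^ k = ga ^ (7 * k) * gx := by
  induction k with
  | zero => simp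
  | succ k ih => rw [pow_succ, ← mul_assoc, ih, mul_assoc, gxa, ← mul_assoc, ← pow_add]; rfl

lemma gxjak (j k : ℕ) : ∃ m, gx ^ j * ga ^ k = ga ^ m * gx ^ j := by
  induction j with
  | zero => exact ⟨k, by simp⟩
  | succ j ih =>
    obtain ⟨m, hm⟩ := ih
    exact ⟨7 * m, by rw [pow_succ', mul_assoc, hm, ← mul_assoc, gxak, mul_assoc]⟩

lemma normal_form (g : QD32) : ∃ i j : ℕ, g = ga ^ i * gx ^ j := by
  have hg : g ∈ Subgroup.closure (Set.range (PresentedGroup.of (rels := qdRels 5))) := by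
    rw [PresentedGroup.closure_range_of]; exact Subgroup.mem_top _
  refine Subgroup.closure_induction (p := fun (g : QD32) _ => ∃ i j : ℕ, g = ga ^ i * gx ^ j)
    ?_ ?_ ?_ ?_ hg
  · rintro _ ⟨i, rfl⟩
    fin_cases i
    · exact ⟨1, 0, by rw [pow_one, pow_zero, mul_one]; rfl⟩
    · exact ⟨0, 1, by rw [pow_one, pow_zero, one_mul]; rfl⟩
  · exact ⟨0, 0, by rw [pow_zero, pow_zero, mul_one]⟩
  · rintro x y _ _ ⟨i, j, rfl⟩ ⟨k, l, rfl⟩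
    obtain ⟨m, hm⟩ := gxjak j k
    refine ⟨i + m, j + l, ?_⟩
    have : ga ^ i * gx ^ j * (ga ^ k * gx ^ l) = ga ^ (i + m) * gx ^ (j + l) := by
      rw [mul_assoc, ← mul_assoc (gx ^ j), hm, pow_add, pow_add]; simp only [mul_assoc]
    exact this
  · rintro x _ ⟨i, j, rfl⟩
    obtain ⟨m, hm⟩ := gxjak j (15 * i)
    refine ⟨m, j, ?_⟩
    have : (ga ^ i * gx ^ j)⁻¹ = ga ^ m * gx ^ j := by
      rw [← hm, inv_eq_iff_mul_eq_one, mul_assoc, ← mul_assoc (gx ^ j), ← pow_add, ← two_mul,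
        pow_mul, gx_pow, one_pow, one_mul, ← pow_add, show i + 15 * i = 16 * i by ring, pow_mul,
        ga_pow, one_pow]
    exact this

section
variable {F : Type} [Field F]

noncomputable abbrev A : MonoidAlgebra F QD32 := MonoidAlgebra.of F QD32 ga
noncomputable abbrev B : MonoidAlgebra F QD32 := MonoidAlgebra.of F QD32 gx

lemma exists_poly (y : MonoidAlgebra F QD32) :
    ∃ f g : F[X], y = aeval (A (F := F)) f + aeval (A (F := F)) g * B := by
  induction y using MonoidAlgebra.induction_on with
  | of g =>
    obtain ⟨i, j, rfl⟩ := normal_form g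
    obtain ⟨k, rfl | rfl⟩ := Nat.even_or_odd' j
    · refine ⟨X ^ i, 0, ?_⟩
      rw [pow_mul, gx_pow, one_pow, mul_one]
      simp [A]
    · refine ⟨0, X ^ i, ?_⟩
      rw [pow_succ, pow_mul, gx_pow, one_pow, one_mul, map_mul, map_pow]
      simp [A]
  | add y z hy hz =>
    obtain ⟨f, g, rfl⟩ := hy
    obtain ⟨f', g', rfl⟩ := hz
    exact ⟨f + f', g + g', by rw [map_add, map_add, add_mul]; abel⟩
  | smul r y hy =>
    obtain ⟨f, g, rfl⟩ := hy
    exact ⟨r • f, r • g, by rw [map_smul, map_smul, smul_add, smul_mul_assoc]⟩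

lemma exists_hom {R : Type} [Ring R] [Algebra F R] (a x : R) (ha : a ^ 16 = 1) (hx : x ^ 2 = 1)
    (hxax : x * a * x = a ^ 7) :
    ∃ φ : MonoidAlgebra F QD32 →ₐ[F] R, φ A = a ∧ φ B = x := by
  let ua : Rˣ := ⟨a, a ^ 15, by rw [← pow_succ', ha], by rw [← pow_succ, ha]⟩
  let ux : Rˣ := ⟨x, x, by rw [← pow_two, hx], by rw [← pow_two, hx]⟩
  have h : ∀ r ∈ qdRels 5, FreeGroup.lift ![ua, ux] r = 1 := by
    intro r hr
    simp only [qdRels, Set.mem_insert_iff, Set.mem_singleton_iff] at hr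
    rcases hr with rfl | rfl | rfl
    · ext; simpa [ua] using ha
    · ext; simpa [ux] using hx
    · rw [map_mul, map_inv, mul_inv_eq_one]
      ext; simpa [ua, ux] using hxax
  let ψ : QD32 →* Rˣ := PresentedGroup.toGroup h
  have h1 : ψ ga = ua := PresentedGroup.toGroup.of h
  have h2 : ψ gx = ux := PresentedGroup.toGroup.of h
  refine ⟨MonoidAlgebra.lift F R QD32 ((Units.coeHom R).comp ψ), ?_, ?_⟩
  · simp [A, h1, ua]
  · simp [B, h2, ux]

/-- Evaluating under a hom. -/
lemma hom_eval {R : Type} [Ring R] [Algebra F R] {a x : R} {φ : MonoidAlgebra F QD32 →ₐ[F] R}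
    (h : φ A = a ∧ φ B = x) (f g : F[X]) :
    φ (aeval A f + aeval A g * B) = aeval a f + aeval a g * x := by
  rw [map_add, map_mul, h.2, ← aeval_algHom_apply, ← aeval_algHom_apply, h.1]

lemma matF_rel (t : F) (ht : t ^ 2 = 2 ∨ t = 0) :
    (!![0, -1; 1, t] : Matrix (Fin 2) (Fin 2) F) ^ 16 = 1 ∧
    (!![0, 1; 1, 0] : Matrix (Fin 2) (Fin 2) F) ^ 2 = 1 ∧
    (!![0, 1; 1, 0] : Matrix (Fin 2) (Fin 2) F) * !![0, -1; 1, t] * !![0, 1; 1, 0] =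
      !![0, -1; 1, t] ^ 7 := by
  have hx : (!![0, 1; 1, 0] : Matrix (Fin 2) (Fin 2) F) ^ 2 = 1 := by
    rw [pow_two, Matrix.mul_fin_two, Matrix.one_fin_two]; simp
  have h2 : (!![0, -1; 1, t] : Matrix (Fin 2) (Fin 2) F) ^ 2 = !![-1, -t; t, t ^ 2 - 1] := by
    rw [pow_two, Matrix.mul_fin_two]; simp; ring
  have hc : (!![0, 1; 1, 0] : Matrix (Fin 2) (Fin 2) F) * !![0, -1; 1, t] * !![0, 1; 1, 0] =
      !![t, 1; -1, 0] := by
    rw [Matrix.mul_fin_two, Matrix.mul_fin_two]; simp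
  have key : (!![0, -1; 1, t] : Matrix (Fin 2) (Fin 2) F) ^ 8 = 1 := by
    rw [show 8 = 2 * 2 * 2 by rfl, pow_mul, pow_mul, h2, pow_two, pow_two, Matrix.mul_fin_two,
      Matrix.mul_fin_two, Matrix.one_fin_two]
    rcases ht with ht | rfl
    · congr! 4 <;> simp <;> grind
    · simp
  refine ⟨by rw [show 16 = 8 * 2 by rfl, pow_mul, key, one_pow], hx, ?_⟩
  rw [hc]
  have h1 : (!![t, 1; -1, 0] : Matrix (Fin 2) (Fin 2) F) * !![0, -1; 1, t] = 1 := by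
    rw [Matrix.mul_fin_two, Matrix.one_fin_two]; simp
  calc _ = (!![t, 1; -1, 0] : Matrix (Fin 2) (Fin 2) F) * !![0, -1; 1, t] ^ 8 := by
        rw [key, mul_one]
    _ = _ := by rw [pow_succ' _ 7, ← mul_assoc, h1, one_mul]

variable {K : Type} [Field K] [Algebra F K]

lemma matF_vanish (t : F) (l : K) (hl : l ^ 2 = algebraMap F K t * l - 1) (hl2 : l ^ 2 ≠ 1)
    (f g : F[X])
    (h : aeval (!![0, -1; 1, t] : Matrix (Fin 2) (Fin 2) F) f +
      aeval (!![0, -1; 1, t] : Matrix (Fin 2) (Fin 2) F) g * !![0, 1; 1, 0] = 0) :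
    aeval l f = 0 ∧ aeval l g = 0 := by
  set C : Matrix (Fin 2) (Fin 2) F := !![0, -1; 1, t] with hC
  -- the row vector (1, l) is an eigenvector of C
  have ev : ∀ f : F[X],
      algebraMap F K ((aeval C f) 0 0) + l * algebraMap F K ((aeval C f) 1 0) = aeval l f ∧
      algebraMap F K ((aeval C f) 0 1) + l * algebraMap F K ((aeval C f) 1 1) =
        aeval l f * l := by
    intro f
    induction f using Polynomial.induction_on' with
    | add p q hp hq =>
      simp only [map_add, Matrix.add_apply]
      constructor
      · linear_combination hp.1 + hq.1
      · linear_combination hp.2 + hq.2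
    | monomial n c =>
      induction n with
      | zero => simp [Matrix.algebraMap_eq_diagonal, mul_comm]
      | succ n ih =>
        have e : (monomial (n + 1) c : F[X]) = monomial n c * X := by
          rw [monomial_mul_X]
        rw [e, map_mul, map_mul, aeval_X, aeval_X]
        generalize aeval C (monomial n c) = M at ih ⊢
        generalize aeval l (monomial n c) = v at ih ⊢
        simp only [hC, Matrix.mul_apply, Fin.sum_univ_two]
        simp
        constructor
        · linear_combination ih.2
        · linear_combination algebraMap F K t * ih.2 - ih.1 - v * hl
  obtain ⟨f1, f2⟩ := ev f
  obtain ⟨g1, g2⟩ := ev g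
  have e00 := congrFun (congrFun h 0) 0
  have e01 := congrFun (congrFun h 0) 1
  have e10 := congrFun (congrFun h 1) 0
  have e11 := congrFun (congrFun h 1) 1
  simp [Matrix.mul_apply, Fin.sum_univ_two] at e00 e01 e10 e11
  apply_fun algebraMap F K at e00 e01 e10 e11
  rw [map_add, map_zero] at e00 e01 e10 e11
  have r1 : aeval l f + aeval l g * l = 0 := by
    linear_combination e00 + l * e10 - f1 - g2
  have r2 : aeval l f * l + aeval l g = 0 := by
    linear_combination e01 + l * e11 - f2 - g1
  have hne : l ^ 2 - 1 ≠ 0 := sub_ne_zero.mpr hl2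
  have hg : aeval l g = 0 := by
    apply (mul_eq_zero.mp (?_ : (l ^ 2 - 1) * aeval l g = 0)).resolve_left hne
    linear_combination l * r1 - r2
  exact ⟨by rw [hg] at r1; simpa using r1, hg⟩

lemma matK_rel (z : K) (hz : z ^ 16 = 1) :
    (!![z, 0; 0, z ^ 7] : Matrix (Fin 2) (Fin 2) K) ^ 16 = 1 ∧
    (!![0, 1; 1, 0] : Matrix (Fin 2) (Fin 2) K) ^ 2 = 1 ∧
    (!![0, 1; 1, 0] : Matrix (Fin 2) (Fin 2) K) * !![z, 0; 0, z ^ 7] * !![0, 1; 1, 0] =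
      !![z, 0; 0, z ^ 7] ^ 7 := by
  have hd : ∀ n : ℕ, (!![z, 0; 0, z ^ 7] : Matrix (Fin 2) (Fin 2) K) ^ n =
      !![z ^ n, 0; 0, (z ^ 7) ^ n] := by
    intro n
    induction n with
    | zero => simp [Matrix.one_fin_two]
    | succ n ih => rw [pow_succ, ih, Matrix.mul_fin_two]; simp [pow_succ]
  refine ⟨?_, ?_, ?_⟩
  · rw [hd, ← pow_mul, mul_comm, pow_mul, hz, Matrix.one_fin_two]; simp
  · rw [pow_two, Matrix.mul_fin_two, Matrix.one_fin_two]; simp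
  · have h49 : z ^ (7 * 7) = z := by
      rw [show 7 * 7 = 16 * 3 + 1 by rfl, pow_succ, pow_mul, hz, one_pow, one_mul]
    rw [hd, Matrix.mul_fin_two, Matrix.mul_fin_two, ← pow_mul, h49]
    simp

lemma matK_vanish (z w : K) (f g : F[X])
    (h : aeval (!![z, 0; 0, w] : Matrix (Fin 2) (Fin 2) K) f +
      aeval (!![z, 0; 0, w] : Matrix (Fin 2) (Fin 2) K) g * !![0, 1; 1, 0] = 0) :
    (aeval z f = 0 ∧ aeval z g = 0) ∧ (aeval w f = 0 ∧ aeval w g = 0) := by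
  have ev : ∀ f : F[X], aeval (!![z, 0; 0, w] : Matrix (Fin 2) (Fin 2) K) f =
      !![aeval z f, 0; 0, aeval w f] := by
    intro f
    induction f using Polynomial.induction_on' with
    | add p q hp hq => rw [map_add, hp, hq]; simp
    | monomial n c =>
      induction n with
      | zero =>
        ext i j
        fin_cases i <;> fin_cases j <;> simp [Matrix.algebraMap_matrix_apply]
      | succ n ih =>
        have e : (monomial (n + 1) c : F[X]) = monomial n c * X := by
          rw [monomial_mul_X]
        rw [e, map_mul, ih, aeval_X, Matrix.mul_fin_two]
        simp [pow_succ, mul_assoc]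
  rw [ev, ev, Matrix.mul_fin_two] at h
  have e00 := congrFun (congrFun h 0) 0
  have e01 := congrFun (congrFun h 0) 1
  have e10 := congrFun (congrFun h 1) 0
  have e11 := congrFun (congrFun h 1) 1
  simp at e00 e01 e10 e11
  exact ⟨⟨e00, e01⟩, ⟨e11, e10⟩⟩

lemma poly_zero {z : K} (hz : IsPrimitiveRoot z 16) (f : F[X]) (hf : f.degree < 16)
    (h : ∀ i : ℕ, i < 16 → aeval (z ^ i) f = 0) : f = 0 := by
  have hinj : Function.Injective (fun i : Fin 16 => z ^ (i : ℕ)) := by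
    intro i j hij
    exact Fin.ext (hz.pow_inj i.2 j.2 hij)
  have : f.map (algebraMap F K) = 0 := by
    refine Polynomial.eq_zero_of_natDegree_lt_card_of_eval_eq_zero _ hinj ?_ ?_
    · intro i
      rw [eval_map_algebraMap]
      exact h i i.2
    · rw [natDegree_map, Fintype.card_fin]
      by_cases h0 : f = 0
      · simp [h0]
      · exact (natDegree_lt_iff_degree_lt h0).mpr hf
  exact (Polynomial.map_eq_zero _).mp this

lemma poly_dvd {z : K} (hz : IsPrimitiveRoot z 16) (f : F[X])
    (h : ∀ i : ℕ, i < 16 → aeval (z ^ i) f = 0) : aeval (A (F := F)) f = 0 := by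
  have hm : (X ^ 16 - 1 : F[X]).Monic := monic_X_pow_sub_C (1 : F) (by norm_num)
  have hr : f %ₘ (X ^ 16 - 1) = 0 := by
    apply poly_zero hz
    · refine lt_of_lt_of_eq (degree_modByMonic_lt f hm) ?_
      exact degree_X_pow_sub_C (by norm_num) (1 : F)
    · intro i hi
      have e := h i hi
      rw [← modByMonic_add_div f (X ^ 16 - 1), map_add, map_mul] at e
      have : aeval (z ^ i) (X ^ 16 - 1 : F[X]) = 0 := by
        simp [← pow_mul, mul_comm i, pow_mul z 16 i, hz.pow_eq_one]
      rwa [this, zero_mul, add_zero] at e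
  rw [← modByMonic_add_div f (X ^ 16 - 1), hr, zero_add, map_mul]
  have : aeval (A (F := F)) (X ^ 16 - 1 : F[X]) = 0 := by
    simp only [map_sub, map_pow, aeval_X, map_one]
    rw [← map_pow, ga_pow, map_one, sub_self]
  rw [this, zero_mul]

lemma frob [Fintype F] (w : K) (f : F[X]) (h : aeval w f = 0) :
    aeval (w ^ Fintype.card F) f = 0 := by
  have := aeval_algHom_apply (FiniteField.frobeniusAlgHom F K) w f
  rw [h, map_zero] at this
  simpa using this

end

end QDAux

open QDAux


/-- For `q ≡ -1, -7 (mod 16)` (i.e. `q % 16 = 15` or `q % 16 = 9`),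
`F_q[QD_32] ≅ F_q⁴ ⊕ M(2,F_q)³ ⊕ M(2,F_{q²})²`. -/
theorem groupAlgebra_QD32_wedderburn_neg_one_seven (F : Type) [Field F] [Fintype F]
    (p n : ℕ) [Fact p.Prime] (hp : Odd p) [CharP F p]
    (hn : 0 < n) (hq : Fintype.card F = p ^ n)
    (h16 : Fintype.card F % 16 = 15 ∨ Fintype.card F % 16 = 9)
    (K : Type) [Field K] [Fintype K] [Algebra F K]
    (hK : Fintype.card K = Fintype.card F ^ 2) :
    Nonempty (MonoidAlgebra F QD32 ≃ₐ[F]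
      (F × F × F × F ×
        Matrix (Fin 2) (Fin 2) F × Matrix (Fin 2) (Fin 2) F × Matrix (Fin 2) (Fin 2) F ×
        Matrix (Fin 2) (Fin 2) K × Matrix (Fin 2) (Fin 2) K)) := by
  classical
  set q := Fintype.card F with hqdef
  -- a primitive root of order 16 in K
  obtain ⟨z, hz⟩ : ∃ z : K, IsPrimitiveRoot z 16 := by
    obtain ⟨g, hg⟩ := IsCyclic.exists_ofOrder_eq_natCard (α := Kˣ)
    have hc : Nat.card Kˣ = q ^ 2 - 1 := by
      rw [Nat.card_eq_fintype_card, Fintype.card_units, hK]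
    have hd : 16 ∣ q ^ 2 - 1 := by
      have : q ^ 2 % 16 = 1 := by
        rcases h16 with h | h <;> simp [Nat.pow_mod, h]
      omega
    obtain ⟨m, hm⟩ := hd
    have hpos : 0 < orderOf g := orderOf_pos g
    have hp2 := (IsPrimitiveRoot.orderOf g).pow (a := m) (b := 16) hpos
      (by rw [hg, hc, hm, mul_comm])
    exact ⟨_, hp2.map_of_injective (f := Units.coeHom K) Units.val_injective⟩
  have hz16 : z ^ 16 = 1 := hz.pow_eq_one
  have hpow : ∀ n, z ^ n = z ^ (n % 16) := fun n => pow_eq_pow_mod n hz16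
  have hz8 : z ^ 8 = -1 := by
    have h1 : z ^ 8 ≠ 1 := hz.pow_ne_one_of_pos_of_lt (by norm_num) (by norm_num)
    have h2 : (z ^ 8 - 1) * (z ^ 8 + 1) = 0 := by linear_combination hz16
    exact eq_neg_of_add_eq_zero_left ((mul_eq_zero.mp h2).resolve_left (sub_ne_zero.mpr h1))
  have h2F : (2 : F) ≠ 0 := by
    intro h0
    have h1 : p ∣ 2 := (CharP.cast_eq_zero_iff F p 2).mp (by exact_mod_cast h0)
    have h2 : p = 2 := (Nat.prime_dvd_prime_iff_eq Fact.out Nat.prime_two).mp h1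
    rw [h2] at hp
    exact absurd hp (by decide)
  -- square root of two
  obtain ⟨s, hs, hsz⟩ : ∃ s : F, s ^ 2 = 2 ∧ algebraMap F K s = z ^ 2 + z ^ 14 := by
    have hsq : IsSquare (2 : F) := FiniteField.isSquare_two_iff.mpr (by omega)
    obtain ⟨s, hs⟩ := hsq
    have e : (algebraMap F K s) ^ 2 = 2 := by
      rw [← map_pow, pow_two, ← hs]; exact map_ofNat _ 2
    have : (algebraMap F K s - (z ^ 2 + z ^ 14)) * (algebraMap F K s + (z ^ 2 + z ^ 14)) = 0 := by
      linear_combination e - 2 * hz16 - z ^ 12 * hz16 - z ^ 4 * hz8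
    rcases mul_eq_zero.mp this with h | h
    · exact ⟨s, by rw [hs]; ring, sub_eq_zero.mp h⟩
    · exact ⟨-s, by rw [hs]; ring, by rw [map_neg]; linear_combination -h⟩
  -- the nine representations
  obtain ⟨φ1, h1⟩ := exists_hom (F := F) (1 : F) 1 (by norm_num) (by norm_num) (by norm_num)
  obtain ⟨φ2, h2⟩ := exists_hom (F := F) (1 : F) (-1) (by norm_num) (by norm_num) (by norm_num)
  obtain ⟨φ3, h3⟩ := exists_hom (F := F) (-1 : F) 1 (by norm_num) (by norm_num) (by norm_num)
  obtain ⟨φ4, h4⟩ := exists_hom (F := F) (-1 : F) (-1) (by norm_num) (by norm_num) (by norm_num)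
  have m5 := matF_rel s (Or.inl hs)
  have m6 := matF_rel (0 : F) (Or.inr rfl)
  have m7 := matF_rel (-s) (Or.inl (by rw [neg_sq, hs]))
  have m8 := matK_rel z hz16
  have m9 := matK_rel (z ^ 3) (by rw [← pow_mul, mul_comm, pow_mul, hz16, one_pow])
  obtain ⟨φ5, h5⟩ := exists_hom (F := F) _ _ m5.1 m5.2.1 m5.2.2
  obtain ⟨φ6, h6⟩ := exists_hom (F := F) _ _ m6.1 m6.2.1 m6.2.2
  obtain ⟨φ7, h7⟩ := exists_hom (F := F) _ _ m7.1 m7.2.1 m7.2.2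
  obtain ⟨φ8, h8⟩ := exists_hom (F := F) _ _ m8.1 m8.2.1 m8.2.2
  obtain ⟨φ9, h9⟩ := exists_hom (F := F) _ _ m9.1 m9.2.1 m9.2.2
  let Φ := φ1.prod (φ2.prod (φ3.prod (φ4.prod (φ5.prod (φ6.prod (φ7.prod (φ8.prod φ9)))))))
  have key : ∀ f g : F[X], Φ (aeval A f + aeval A g * B) = 0 →
      ∀ i : ℕ, i < 16 → aeval (z ^ i) f = 0 ∧ aeval (z ^ i) g = 0 := by
    intro f g h
    simp only [Φ, AlgHom.prod_apply, Prod.mk_eq_zero] at h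
    rw [hom_eval h1, hom_eval h2, hom_eval h3, hom_eval h4, hom_eval h5, hom_eval h6,
      hom_eval h7, hom_eval h8, hom_eval h9] at h
    obtain ⟨k1, k2, k3, k4, k5, k6, k7, k8, k9⟩ := h
    have lin : ∀ c : F, aeval c f + aeval c g * 1 = 0 → aeval c f + aeval c g * (-1) = 0 →
        aeval (algebraMap F K c) f = 0 ∧ aeval (algebraMap F K c) g = 0 := by
      intro c hc1 hc2
      rw [aeval_algebraMap_apply, aeval_algebraMap_apply]
      have hf : aeval c f = 0 := by
        apply (mul_eq_zero.mp (?_ : 2 * aeval c f = 0)).resolve_left h2F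
        linear_combination hc1 + hc2
      have hg : aeval c g = 0 := by linear_combination hc1 - hf
      rw [hf, hg, map_zero]; exact ⟨rfl, rfl⟩
    have p0 := lin 1 k1 k2
    have p8 := lin (-1) k3 k4
    rw [map_one] at p0
    rw [map_neg, map_one, ← hz8] at p8
    have ne : ∀ i : ℕ, i % 8 ≠ 0 → (z ^ i) ^ 2 ≠ 1 := by
      intro i hi h0
      rw [← pow_mul] at h0
      have := hz.dvd_of_pow_eq_one _ h0
      omega
    have p2 := matF_vanish s (z ^ 2) (by rw [hsz]; linear_combination -hz16) (ne _ (by norm_num))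
      f g k5
    have p14 := matF_vanish s (z ^ 14)
      (by rw [hsz]; linear_combination -hz16) (ne _ (by norm_num)) f g k5
    have p4 := matF_vanish (0 : F) (z ^ 4)
      (by rw [map_zero]; linear_combination hz8) (ne _ (by norm_num)) f g k6
    have p12 := matF_vanish (0 : F) (z ^ 12)
      (by rw [map_zero]; linear_combination z ^ 8 * hz16 + hz8) (ne _ (by norm_num)) f g k6
    have p6 := matF_vanish (-s) (z ^ 6)
      (by rw [map_neg, hsz]; linear_combination (z ^ 12 + z ^ 4 * 0 + 1) * hz8 * 1 + 0 * hz16)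
      (ne _ (by norm_num)) f g k7
    have p10 := matF_vanish (-s) (z ^ 10)
      (by rw [map_neg, hsz]; linear_combination (z ^ 12 + z ^ 16 + 1 - z ^ 8) * hz8)
      (ne _ (by norm_num)) f g k7
    obtain ⟨p1, p7⟩ := matK_vanish _ _ f g k8
    obtain ⟨p3, p5⟩ := matK_vanish _ _ f g k9
    rw [← pow_mul, hpow] at p5
    have fr : ∀ i : ℕ, (aeval (z ^ i) f = 0 ∧ aeval (z ^ i) g = 0) →
        (aeval (z ^ ((i * (q % 16)) % 16)) f = 0 ∧ aeval (z ^ ((i * (q % 16)) % 16)) g = 0) := by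
      intro i hi
      have e : z ^ ((i * (q % 16)) % 16) = (z ^ i) ^ q := by
        rw [← pow_mul, hpow (i * q)]; simp [Nat.mul_mod]
      rw [e]
      exact ⟨frob _ f hi.1, frob _ g hi.2⟩
    have f1 := fr 1 (by rwa [pow_one])
    have f7 := fr 7 p7
    have f3 := fr 3 p3
    have f5 := fr 5 p5
    intro i hi
    rcases h16 with h16 | h16 <;> rw [h16] at f1 f3 f5 f7 <;> norm_num at f1 f3 f5 f7 p5 <;>
      interval_cases i <;> first | assumption | (simpa using p0) | (simpa using p1)
  have hinj : Function.Injective Φ := by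
    rw [injective_iff_map_eq_zero]
    intro y hy
    obtain ⟨f, g, rfl⟩ := exists_poly y
    have := key f g hy
    rw [poly_dvd hz f fun i hi => (this i hi).1, poly_dvd hz g fun i hi => (this i hi).2]
    simp
  have hsurj : Function.Surjective Φ := by
    let Ψ : (degreeLT F 16 × degreeLT F 16) →ₗ[F] MonoidAlgebra F QD32 :=
      LinearMap.coprod ((aeval A).toLinearMap ∘ₗ (degreeLT F 16).subtype)
        ((LinearMap.mulRight F B) ∘ₗ (aeval A).toLinearMap ∘ₗ (degreeLT F 16).subtype)
    let Θ := Φ.toLinearMap ∘ₗ Ψ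
    have hΘ : Function.Injective Θ := by
      rw [injective_iff_map_eq_zero]
      rintro ⟨⟨f, hf⟩, ⟨g, hg⟩⟩ h
      have := key f g h
      have ef := poly_zero hz f (mem_degreeLT.mp hf) fun i hi => (this i hi).1
      have eg := poly_zero hz g (mem_degreeLT.mp hg) fun i hi => (this i hi).2
      subst ef eg
      rfl
    have hfK : Module.finrank F K = 2 := by
      have := Module.card_eq_pow_finrank (K := F) (V := K)
      rw [hK] at this
      exact (Nat.pow_right_injective Fintype.one_lt_card this).symm
    have : Module.Finite F (degreeLT F 16) := Module.Finite.equiv (degreeLTEquiv F 16).symm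
    have hd : Module.finrank F (degreeLT F 16) = 16 := by
      rw [(degreeLTEquiv F 16).finrank_eq]; simp
    have hdim : Module.finrank F (degreeLT F 16 × degreeLT F 16) = Module.finrank F
        (F × F × F × F ×
        Matrix (Fin 2) (Fin 2) F × Matrix (Fin 2) (Fin 2) F × Matrix (Fin 2) (Fin 2) F ×
        Matrix (Fin 2) (Fin 2) K × Matrix (Fin 2) (Fin 2) K) := by
      simp [Module.finrank_prod, Module.finrank_matrix, hd, hfK]
    have hs := (LinearMap.injective_iff_surjective_of_finrank_eq_finrank hdim).mp hΘ
    intro y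
    obtain ⟨w, hw⟩ := hs y
    exact ⟨Ψ w, hw⟩
  exact ⟨AlgEquiv.ofBijective Φ ⟨hinj, hsurj⟩⟩
end

section
/- Let F_q be a finite field of odd characteristic p with q = p^n elements. If q ≡ ±3 (mod 16) or q ≡ ±5 (mod 16), then the group algebra F_q[QD_32] is isomorphic as an F_q-algebra to F_q ⊕ F_q ⊕ F_q ⊕ F_q ⊕ M(2,F_q) ⊕ M(2,F_{q^2}) ⊕ M(2,F_{q^4}), where F_{q^m} denotes the field with q^m elements. -/
namespace QD32

/-- The generator of order 16. -/
def ga : QD32 := PresentedGroup.of (rels := qdRels 5) 0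

/-- The generator of order 2. -/
def gx : QD32 := PresentedGroup.of (rels := qdRels 5) 1

lemma ga_pow : ga ^ 16 = 1 := by
  have := PresentedGroup.one_of_mem (rels := qdRels 5) (x := FreeGroup.of 0 ^ 16)
    (by simp [qdRels])
  rw [map_pow] at this
  exact this

lemma gx_pow : gx ^ 2 = 1 := by
  have := PresentedGroup.one_of_mem (rels := qdRels 5) (x := FreeGroup.of 1 ^ 2)
    (by simp [qdRels])
  rw [map_pow] at this
  exact this

lemma gx_ga_gx : gx * ga * gx = ga ^ 7 := by
  have := PresentedGroup.mk_eq_mk_of_mul_inv_mem (rels := qdRels 5)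
    (x := FreeGroup.of 1 * FreeGroup.of 0 * FreeGroup.of 1) (y := FreeGroup.of 0 ^ 7)
    (by simp [qdRels])
  rw [map_mul, map_mul, map_pow] at this
  exact this

lemma closure_gen : Subgroup.closure {ga, gx} = (⊤ : Subgroup QD32) := by
  have h := PresentedGroup.closure_range_of (qdRels 5)
  have h2 : Set.range (PresentedGroup.of (rels := qdRels 5)) = {ga, gx} := by
    ext y
    rw [Set.mem_range, Fin.exists_fin_two]
    constructor
    · rintro (h | h)
      · left; exact h.symm
      · right; exact h.symm
    · rintro (h | h)
      · left; exact h.symm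
      · right; exact h.symm
  rw [h2] at h
  exact h

lemma gx_mul_pow (i : ℕ) : gx * ga ^ i = ga ^ (7 * i) * gx := by
  have h1 : gx * gx = 1 := by rw [← pow_two, gx_pow]
  have h : gx * ga = ga ^ 7 * gx := by
    rw [← gx_ga_gx, mul_assoc, h1, mul_one]
  have : SemiconjBy gx ga (ga ^ 7) := h
  have := this.pow_right i
  rw [pow_mul]
  exact this

lemma exists_form (g : QD32) : ∃ i j : ℕ, g = ga ^ i * gx ^ j := by
  have hg : g ∈ Subgroup.closure {ga, gx} := by rw [closure_gen]; trivial
  have hxinv : gx⁻¹ = gx := by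
    rw [inv_eq_iff_mul_eq_one, ← pow_two, gx_pow]
  have hainv : ga⁻¹ = ga ^ 15 := by
    rw [inv_eq_iff_mul_eq_one, ← pow_succ', ga_pow]
  induction hg using Subgroup.closure_induction_left with
  | one => exact ⟨0, 0, by simp⟩
  | mul_left x hx y hy ih =>
    obtain ⟨i, j, rfl⟩ := ih
    rcases hx with rfl | rfl
    · exact ⟨i + 1, j, by rw [pow_succ', mul_assoc]⟩
    · exact ⟨7 * i, j + 1, by rw [← mul_assoc, gx_mul_pow, pow_succ', mul_assoc]⟩
  | inv_mul_cancel x hx y hy ih =>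
    obtain ⟨i, j, rfl⟩ := ih
    rcases hx with rfl | rfl
    · exact ⟨15 + i, j, by rw [hainv, pow_add, mul_assoc]⟩
    · exact ⟨7 * i, j + 1, by rw [hxinv, ← mul_assoc, gx_mul_pow, pow_succ', mul_assoc]⟩

lemma form_surj : Function.Surjective
    (fun v : Fin 16 × Fin 2 => ga ^ (v.1 : ℕ) * gx ^ (v.2 : ℕ)) := by
  intro g
  obtain ⟨i, j, rfl⟩ := exists_form g
  refine ⟨(⟨i % 16, Nat.mod_lt _ (by norm_num)⟩, ⟨j % 2, Nat.mod_lt _ (by norm_num)⟩), ?_⟩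
  simp only
  rw [← pow_eq_pow_mod i ga_pow, ← pow_eq_pow_mod j gx_pow]

instance : Finite QD32 := Finite.of_surjective _ form_surj

lemma card_le : Nat.card QD32 ≤ 32 := by
  have := Nat.card_le_card_of_surjective _ form_surj
  simpa using this

section Lift

variable (F : Type) [Field F]

/-- Image of `ga` in the group algebra. -/
noncomputable def ra : MonoidAlgebra F QD32 := MonoidAlgebra.of F QD32 ga

/-- Image of `gx` in the group algebra. -/
noncomputable def rx : MonoidAlgebra F QD32 := MonoidAlgebra.of F QD32 gx

lemma finrank_le : Module.finrank F (MonoidAlgebra F QD32) ≤ 32 := by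
  rw [Module.finrank_eq_nat_card_basis (MonoidAlgebra.basis QD32 F)]
  exact card_le

instance : Module.Finite F (MonoidAlgebra F QD32) :=
  Module.Finite.of_basis (MonoidAlgebra.basis QD32 F)

lemma exists_lift {B : Type} [Ring B] [Algebra F B] (A X : B) (hA : A ^ 16 = 1)
    (hX : X ^ 2 = 1) (hXA : X * A * X = A ^ 7) :
    ∃ f : MonoidAlgebra F QD32 →ₐ[F] B, f (ra F) = A ∧ f (rx F) = X := by
  let uA : Bˣ := Units.ofPowEqOne A 16 hA (by norm_num)
  let uX : Bˣ := Units.ofPowEqOne X 2 hX (by norm_num)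
  have huA : (uA : B) = A := rfl
  have huX : (uX : B) = X := rfl
  have hr : ∀ r ∈ qdRels 5, FreeGroup.lift ![uA, uX] r = 1 := by
    intro r hr
    simp only [qdRels, Set.mem_insert_iff, Set.mem_singleton_iff] at hr
    rcases hr with rfl | rfl | rfl
    · ext
      simpa [huA] using hA
    · ext
      simpa [huX] using hX
    · rw [map_mul, map_inv, mul_inv_eq_one]
      ext
      simpa [huA, huX] using hXA
  let φ : QD32 →* Bˣ := PresentedGroup.toGroup hr
  have h0 : φ ga = uA := PresentedGroup.toGroup.of hr (x := 0)
  have h1 : φ gx = uX := PresentedGroup.toGroup.of hr (x := 1)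
  refine ⟨MonoidAlgebra.lift F B QD32 ((Units.coeHom B).comp φ), ?_, ?_⟩
  · rw [ra, MonoidAlgebra.lift_of]; simp [h0, huA]
  · rw [rx, MonoidAlgebra.lift_of]; simp [h1, huX]

end Lift

lemma prod_surj {F R B C : Type} [Field F] [Ring R] [Ring B] [Ring C] [Algebra F R] [Algebra F B]
    [Algebra F C] (f : R →ₐ[F] B) (g : R →ₐ[F] C) (hf : Function.Surjective f)
    (hg : Function.Surjective g) (e : R) (hfe : f e = 1) (hge : g e = 0) :
    Function.Surjective (f.prod g) := by
  rintro ⟨b, c⟩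
  obtain ⟨u, rfl⟩ := hf b
  obtain ⟨v, rfl⟩ := hg c
  exact ⟨e * u + (1 - e) * v, by simp [hfe, hge]⟩

lemma adjoin_top {F K : Type} [Field F] [Fintype F] [Field K] [Fintype K] [Algebra F K]
    (N m : ℕ) (hN : Fintype.card K = Fintype.card F ^ N)
    (hm : ∀ d, d ∣ N → d ≠ N → d ∣ m) (c : K) (hc : c ^ (Fintype.card F ^ m) ≠ c) :
    Algebra.adjoin F {c} = ⊤ := by
  classical
  have hfr : Module.finrank F K = N := by
    have := Module.card_eq_pow_finrank (K := F) (V := K)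
    rw [hN] at this
    exact (Nat.pow_right_injective Fintype.one_lt_card this).symm
  let L := IntermediateField.adjoin F {c}
  have hcL : c ∈ L := IntermediateField.mem_adjoin_simple_self F c
  have hmul : Module.finrank F L * Module.finrank L K = N := by
    rw [Module.finrank_mul_finrank, hfr]
  have hL : L = ⊤ := by
    by_contra hne
    have hd : Module.finrank F L ≠ N := by
      intro h
      apply hne
      apply IntermediateField.eq_of_le_of_finrank_eq le_top
      rw [h, IntermediateField.finrank_top', hfr]
    obtain ⟨k, hk⟩ := hm _ (Dvd.intro _ hmul) hd
    apply hc
    have : Fintype L := Fintype.ofFinite L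
    have hcard := Module.card_eq_pow_finrank (K := F) (V := L)
    have h2 := FiniteField.pow_card_pow k (⟨c, hcL⟩ : L)
    rw [hcard, ← pow_mul, ← hk] at h2
    simpa using congrArg (Subtype.val) h2
  have := IntermediateField.adjoin_simple_toSubalgebra_of_isAlgebraic
    (Algebra.IsAlgebraic.isAlgebraic (R := F) c)
  rw [← this]
  change L.toSubalgebra = ⊤
  rw [hL, IntermediateField.top_toSubalgebra]

/-- Matrix of the rotation. -/
def mA {K : Type} [Field K] (c d : K) : Matrix (Fin 2) (Fin 2) K := !![0, -d; 1, c]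

/-- Matrix of the reflection. -/
def mX {K : Type} [Field K] (c : K) : Matrix (Fin 2) (Fin 2) K := !![1, c; 0, -1]

lemma mX_sq {K : Type} [Field K] (c : K) : mX c ^ 2 = 1 := by
  ext i j
  fin_cases i <;> fin_cases j <;> simp [mX, pow_two, Matrix.mul_apply, Fin.sum_univ_two]

lemma mXAX {K : Type} [Field K] (c d : K) :
    mX c * mA c d * mX c = algebraMap K _ c - mA c d := by
  ext i j
  fin_cases i <;> fin_cases j <;>
    simp [mX, mA, Matrix.mul_apply, Fin.sum_univ_two, Matrix.algebraMap_matrix_apply]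

lemma mA_sq {K : Type} [Field K] (c d : K) :
    mA c d ^ 2 = algebraMap K _ c * mA c d - algebraMap K _ d := by
  ext i j
  fin_cases i <;> fin_cases j <;>
    simp [mA, pow_two, Matrix.mul_apply, Fin.sum_univ_two, Matrix.algebraMap_matrix_apply] <;> ring

lemma rep_surj {F K R : Type} [Field F] [Field K] [Ring R] [Algebra F K] [Algebra F R]
    (c d : K) (hD : c ^ 2 - 4 * d ≠ 0)
    (hc : Algebra.adjoin F {c} = ⊤) (f : R →ₐ[F] Matrix (Fin 2) (Fin 2) K) (a x : R)
    (ha : f a = mA c d) (hx : f x = mX c) : Function.Surjective f := by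
  have hA : mA c d ∈ f.range := ⟨a, ha⟩
  have hX : mX c ∈ f.range := ⟨x, hx⟩
  have hsc : ∀ k : K, algebraMap K (Matrix (Fin 2) (Fin 2) K) k ∈ f.range := by
    have : Algebra.adjoin F {c} ≤
        f.range.comap (IsScalarTower.toAlgHom F K (Matrix (Fin 2) (Fin 2) K)) := by
      rw [Algebra.adjoin_le_iff]
      rw [Set.singleton_subset_iff]
      change algebraMap K (Matrix (Fin 2) (Fin 2) K) c ∈ f.range
      have h := mXAX c d
      rw [eq_sub_iff_add_eq] at h
      rw [← h]
      exact add_mem (mul_mem (mul_mem hX hA) hX) hA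
    intro k
    rw [hc] at this
    exact this (Algebra.mem_top (x := k))
  intro M
  have hsm : ∀ (k : K) (Y : Matrix (Fin 2) (Fin 2) K), Y ∈ f.range → k • Y ∈ f.range := by
    intro k Y hY
    rw [Algebra.smul_def]
    exact mul_mem (hsc k) hY
  set D := c ^ 2 - 4 * d with hDdef
  have hP : mA c d - mA c d * mX c ∈ f.range := sub_mem hA (mul_mem hA hX)
  have hQ : 1 - mX c ∈ f.range := sub_mem (one_mem _) hX
  have h12 : (!![0, 1; 0, 0] : Matrix (Fin 2) (Fin 2) K) ∈ f.range := by
    have h := sub_mem (hsm 2 _ hP) (hsm c _ hQ)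
    have h' : D • (!![0, 1; 0, 0] : Matrix (Fin 2) (Fin 2) K) ∈ f.range := by
      convert h using 1
      ext i j
      fin_cases i <;> fin_cases j <;> simp [mX, mA, hDdef] <;> ring
    simpa only [inv_smul_smul₀ hD] using hsm D⁻¹ _ h'
  have h22 : (!![0, 0; 0, 1] : Matrix (Fin 2) (Fin 2) K) ∈ f.range := by
    have h := sub_mem (hsm c _ hP) (hsm (2 * d) _ hQ)
    have h' : D • (!![0, 0; 0, 1] : Matrix (Fin 2) (Fin 2) K) ∈ f.range := by
      convert h using 1
      ext i j
      fin_cases i <;> fin_cases j <;> simp [mX, mA, hDdef] <;> ring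
    simpa only [inv_smul_smul₀ hD] using hsm D⁻¹ _ h'
  have h11 : (!![1, 0; 0, 0] : Matrix (Fin 2) (Fin 2) K) ∈ f.range := by
    convert sub_mem (one_mem f.range) h22 using 1
    ext i j
    fin_cases i <;> fin_cases j <;> simp
  have h21 : (!![0, 0; 1, 0] : Matrix (Fin 2) (Fin 2) K) ∈ f.range := by
    convert sub_mem (mul_mem hA hX) (hsm d _ h12) using 1
    ext i j
    fin_cases i <;> fin_cases j <;> simp [mX, mA, Matrix.mul_apply, Fin.sum_univ_two]
  have : M ∈ f.range := by
    convert add_mem (add_mem (hsm (M 0 0) _ h11) (hsm (M 0 1) _ h12))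
      (add_mem (hsm (M 1 0) _ h21) (hsm (M 1 1) _ h22)) using 1
    ext i j
    fin_cases i <;> fin_cases j <;> simp
  exact this

lemma exists_root {K : Type} [Field K] [Fintype K] (m : ℕ) (hm : 0 < m)
    (h : 2 * m ∣ Fintype.card K - 1) : ∃ z : K, z ^ m = -1 := by
  classical
  obtain ⟨k, hk⟩ := h
  obtain ⟨g, hg⟩ := IsCyclic.exists_ofOrder_eq_natCard (α := Kˣ)
  rw [Nat.card_eq_fintype_card, Fintype.card_units, hk] at hg
  have hk0 : 0 < k := by
    rcases Nat.eq_zero_or_pos k with h | h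
    · have := Fintype.one_lt_card (α := K)
      subst h
      omega
    · exact h
  refine ⟨(g : K) ^ k, ?_⟩
  have h1 : ((g : K) ^ (m * k)) ^ 2 = 1 := by
    have := pow_orderOf_eq_one g
    rw [hg] at this
    have h3 := congrArg (Units.val) this
    rw [← pow_mul, ← Units.val_pow_eq_pow_val]
    rw [show m * k * 2 = 2 * m * k by ring]
    simpa using h3
  rw [← pow_mul, mul_comm]
  rcases (sq_eq_sq_iff_eq_or_eq_neg.mp (h1.trans (one_pow 2).symm)) with h | h
  · exfalso
    have h4 : g ^ (m * k) = 1 := by ext; simpa using h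
    have := orderOf_dvd_of_pow_eq_one h4
    rw [hg] at this
    have := Nat.le_of_dvd (by positivity) this
    nlinarith [Nat.mul_pos hm hk0]
  · exact h

lemma mA_seven {K : Type} [Field K] (c d : K) (hd : d ≠ 0)
    (h8 : mA c d ^ 8 = algebraMap K _ d) :
    mX c * mA c d * mX c = mA c d ^ 7 := by
  rw [mXAX]
  have h1 : (algebraMap K _ c - mA c d) * mA c d = algebraMap K _ d := by
    rw [sub_mul, ← pow_two, mA_sq]; abel
  have h2 : algebraMap K (Matrix (Fin 2) (Fin 2) K) d * mA c d ^ 7 =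
      algebraMap K (Matrix (Fin 2) (Fin 2) K) d * (algebraMap K _ c - mA c d) := by
    rw [← h1, mul_assoc, ← pow_succ', h8, h1, Algebra.commutes]
  rw [← Algebra.smul_def, ← Algebra.smul_def] at h2
  exact (smul_right_injective _ hd h2).symm

lemma mA4 {K : Type} [Field K] (c : K) (hc : c ^ 4 + 4 * c ^ 2 + 2 = 0) :
    mA c (-1) ^ 8 = -1 := by
  have h2 : mA c (-1) ^ 2 = !![1, c; c, 1 + c ^ 2] := by
    ext i j
    fin_cases i <;> fin_cases j <;> simp [mA, pow_two]
  have h4 : mA c (-1) ^ 4 = !![1 + c ^ 2, 2 * c + c ^ 3; 2 * c + c ^ 3,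
      c ^ 2 + (1 + c ^ 2) ^ 2] := by
    rw [show (4 : ℕ) = 2 * 2 by norm_num, pow_mul, h2, pow_two]
    ext i j
    fin_cases i <;> fin_cases j <;> simp <;> ring
  rw [show (8 : ℕ) = 4 * 2 by norm_num, pow_mul, h4, pow_two]
  ext i j
  fin_cases i <;> fin_cases j <;> simp
  · linear_combination (c ^ 2 + 1) * hc
  · linear_combination (c ^ 3 + 2 * c) * hc
  · linear_combination (c ^ 3 + 2 * c) * hc
  · linear_combination (c ^ 4 + 3 * c ^ 2 + 1) * hc

lemma mA2 {K : Type} [Field K] (c : K) (hc : c ^ 2 = 2) :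
    mA c 1 ^ 4 = -1 := by
  have h2 : mA c 1 ^ 2 = !![-1, -c; c, 1] := by
    ext i j
    fin_cases i <;> fin_cases j <;> simp [mA, pow_two]
    linear_combination hc
  rw [show (4 : ℕ) = 2 * 2 by norm_num, pow_mul, h2, pow_two]
  ext i j
  fin_cases i <;> fin_cases j <;> simp
  · linear_combination -hc
  · linear_combination -hc

lemma mA1 {K : Type} [Field K] : mA (0 : K) 1 ^ 2 = -1 := by
  ext i j
  fin_cases i <;> fin_cases j <;> simp [mA, pow_two]

lemma exists_c4 {K : Type} [Field K] [Fintype K] (p k : ℕ) [Fact p.Prime] [CharP K p]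
    (h2 : (2 : K) ≠ 0) (hK : 16 ∣ Fintype.card K - 1) (hpk : p ^ k % 16 = 9) :
    ∃ c : K, c ^ 4 + 4 * c ^ 2 + 2 = 0 ∧ c ^ (p ^ k) ≠ c := by
  obtain ⟨z, hz⟩ := exists_root (K := K) 8 (by norm_num) hK
  have h16 : z ^ 16 = 1 := by linear_combination (z ^ 8 - 1) * hz
  have h1 : (z + z ^ 7) ^ 2 = z ^ 2 - 2 - z ^ 6 := by linear_combination (2 + z ^ 6) * hz
  have h4 : (z + z ^ 7) ^ 4 + 4 * (z + z ^ 7) ^ 2 + 2 = 0 := by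
    linear_combination ((z + z ^ 7) ^ 2 + z ^ 2 - 2 - z ^ 6 + 4) * h1 + (z ^ 4 - 2) * hz
  refine ⟨z + z ^ 7, h4, ?_⟩
  have hzq : z ^ (p ^ k) = - z := by
    rw [pow_eq_pow_mod _ h16, hpk]
    linear_combination z * hz
  rw [add_pow_char_pow, ← pow_mul, mul_comm 7, pow_mul, hzq]
  intro h
  have h0 : z + z ^ 7 = 0 := by
    have : 2 * (z + z ^ 7) = 0 := by linear_combination -h
    exact (mul_eq_zero.mp this).resolve_left h2
  rw [h0] at h4
  apply h2
  linear_combination h4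

lemma exists_c2 {K : Type} [Field K] [Fintype K] (p k : ℕ) [Fact p.Prime] [CharP K p]
    (h2 : (2 : K) ≠ 0) (hK : 8 ∣ Fintype.card K - 1) (hpk : p ^ k % 8 = 3 ∨ p ^ k % 8 = 5) :
    ∃ c : K, c ^ 2 = 2 ∧ c ^ (p ^ k) ≠ c := by
  obtain ⟨z, hz⟩ := exists_root (K := K) 4 (by norm_num) hK
  have h8 : z ^ 8 = 1 := by linear_combination (z ^ 4 - 1) * hz
  have h1 : (z - z ^ 3) ^ 2 = 2 := by linear_combination (z ^ 2 - 2) * hz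
  refine ⟨z - z ^ 3, h1, ?_⟩
  have hcq : (z - z ^ 3) ^ (p ^ k) = - (z - z ^ 3) := by
    rw [sub_pow_char_pow, ← pow_mul, mul_comm 3, pow_mul, pow_eq_pow_mod _ h8]
    rcases hpk with h | h <;> rw [h]
    · linear_combination -z * h8
    · linear_combination (z - z ^ 11 + z ^ 7 - z ^ 3) * hz
  rw [hcq]
  intro h
  have h0 : z - z ^ 3 = 0 := by
    have : 2 * (z - z ^ 3) = 0 := by linear_combination -h
    exact (mul_eq_zero.mp this).resolve_left h2
  rw [h0] at h1
  apply h2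
  linear_combination -h1

end QD32


/-- For `q ≡ ±3, ±5 (mod 16)`,
`F_q[QD_32] ≅ F_q⁴ ⊕ M(2,F_q) ⊕ M(2,F_{q²}) ⊕ M(2,F_{q⁴})`. -/
theorem groupAlgebra_QD32_wedderburn_pm_three_five (F : Type) [Field F] [Fintype F]
    (p n : ℕ) [Fact p.Prime] (hp : Odd p) [CharP F p]
    (hn : 0 < n) (hq : Fintype.card F = p ^ n)
    (h16 : Fintype.card F % 16 = 3 ∨ Fintype.card F % 16 = 13 ∨
      Fintype.card F % 16 = 5 ∨ Fintype.card F % 16 = 11)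
    (K₂ : Type) [Field K₂] [Fintype K₂] [Algebra F K₂]
    (hK₂ : Fintype.card K₂ = Fintype.card F ^ 2)
    (K₄ : Type) [Field K₄] [Fintype K₄] [Algebra F K₄]
    (hK₄ : Fintype.card K₄ = Fintype.card F ^ 4) :
    Nonempty (MonoidAlgebra F QD32 ≃ₐ[F]
      (F × F × F × F × Matrix (Fin 2) (Fin 2) F × Matrix (Fin 2) (Fin 2) K₂ ×
        Matrix (Fin 2) (Fin 2) K₄)) := by
  have hpn2 : p ≠ 2 := by rintro rfl; exact absurd hp (by decide)
  have two_ne : ∀ (K : Type) [Field K] [CharP K p], (2 : K) ≠ 0 := by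
    intro K _ _ h
    have h' : ((2 : ℕ) : K) = 0 := by exact_mod_cast h
    rw [CharP.cast_eq_zero_iff K p, Nat.prime_dvd_prime_iff_eq Fact.out Nat.prime_two] at h'
    exact hpn2 h'
  have hF2 := two_ne F
  have : CharP K₂ p := charP_of_injective_algebraMap (algebraMap F K₂).injective p
  have : CharP K₄ p := charP_of_injective_algebraMap (algebraMap F K₄).injective p
  have h22 := two_ne K₂
  have h42 := two_ne K₄
  set q := Fintype.card F with hqdef
  have hq2 : q ^ 2 % 16 = 9 := by
    rw [Nat.pow_mod]
    rcases h16 with h | h | h | h <;> rw [h]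
  have hq4 : q ^ 4 % 16 = 1 := by
    rw [show 4 = 2 * 2 by norm_num, pow_mul, Nat.pow_mod, hq2]
  obtain ⟨c₄, hc₄, hc₄'⟩ := QD32.exists_c4 (K := K₄) p (n * 2) h42
    (by rw [hK₄]; omega) (by rw [pow_mul, ← hq]; exact hq2)
  obtain ⟨c₂, hc₂, hc₂'⟩ := QD32.exists_c2 (K := K₂) p n h22
    (by rw [hK₂]; omega) (by rw [← hq]; omega)
  rw [pow_mul, ← hq] at hc₄'
  rw [← hq] at hc₂'
  have had₄ : Algebra.adjoin F {c₄} = ⊤ := by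
    refine QD32.adjoin_top 4 2 hK₄ ?_ c₄ hc₄'
    intro d hd hd'
    have := Nat.le_of_dvd (by norm_num) hd
    interval_cases d <;> omega
  have had₂ : Algebra.adjoin F {c₂} = ⊤ := by
    refine QD32.adjoin_top 2 1 hK₂ ?_ c₂ (by rw [pow_one]; exact hc₂')
    intro d hd hd'
    have := Nat.le_of_dvd (by norm_num) hd
    interval_cases d <;> omega
  have had₁ : Algebra.adjoin F {(0 : F)} = ⊤ := by
    rw [Algebra.eq_top_iff]
    intro y
    exact (Algebra.adjoin F {(0 : F)}).algebraMap_mem y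
  -- powers of the matrices
  have e48 := QD32.mA4 c₄ hc₄
  have e24 := QD32.mA2 c₂ hc₂
  have e12 := QD32.mA1 (K := F)
  have e28 : QD32.mA c₂ 1 ^ 8 = 1 := by
    rw [show 8 = 4 * 2 by norm_num, pow_mul, e24]; simp
  have e14 : QD32.mA (0 : F) 1 ^ 4 = 1 := by
    rw [show 4 = 2 * 2 by norm_num, pow_mul, e12]; simp
  have e18 : QD32.mA (0 : F) 1 ^ 8 = 1 := by
    rw [show 8 = 4 * 2 by norm_num, pow_mul, e14]; simp
  -- the representations
  obtain ⟨f₇, f₇a, f₇x⟩ := QD32.exists_lift F (QD32.mA c₄ (-1)) (QD32.mX c₄)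
    (by rw [show 16 = 8 * 2 by norm_num, pow_mul, e48]; simp) (QD32.mX_sq _)
    (QD32.mA_seven _ _ (by simp) (by rw [e48]; simp))
  obtain ⟨f₆, f₆a, f₆x⟩ := QD32.exists_lift F (QD32.mA c₂ 1) (QD32.mX c₂)
    (by rw [show 16 = 8 * 2 by norm_num, pow_mul, e28]; simp) (QD32.mX_sq _)
    (QD32.mA_seven _ _ (by simp) (by rw [e28]; simp))
  obtain ⟨f₅, f₅a, f₅x⟩ := QD32.exists_lift F (QD32.mA (0 : F) 1) (QD32.mX (0 : F))
    (by rw [show 16 = 8 * 2 by norm_num, pow_mul, e18]; simp) (QD32.mX_sq _)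
    (QD32.mA_seven _ _ (by simp) (by rw [e18]; simp))
  obtain ⟨f₄, f₄a, f₄x⟩ := QD32.exists_lift F (-1 : F) (-1 : F)
    (by norm_num) (by norm_num) (by norm_num)
  obtain ⟨f₃, f₃a, f₃x⟩ := QD32.exists_lift F (-1 : F) (1 : F)
    (by norm_num) (by norm_num) (by norm_num)
  obtain ⟨f₂, f₂a, f₂x⟩ := QD32.exists_lift F (1 : F) (-1 : F)
    (by norm_num) (by norm_num) (by norm_num)
  obtain ⟨f₁, f₁a, f₁x⟩ := QD32.exists_lift F (1 : F) (1 : F)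
    (by norm_num) (by norm_num) (by norm_num)
  have lin : ∀ f : MonoidAlgebra F QD32 →ₐ[F] F, Function.Surjective f := fun f y =>
    ⟨algebraMap F _ y, by rw [AlgHom.commutes]; rfl⟩
  have s₇ : Function.Surjective f₇ := by
    refine QD32.rep_surj c₄ (-1) ?_ had₄ f₇ _ _ f₇a f₇x
    intro h
    apply h42
    linear_combination hc₄ - c₄ ^ 2 * h
  have s₆ : Function.Surjective f₆ := by
    refine QD32.rep_surj c₂ 1 ?_ had₂ f₆ _ _ f₆a f₆x
    intro h
    apply h22
    linear_combination hc₂ - h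
  have s₅ : Function.Surjective f₅ := by
    refine QD32.rep_surj (0 : F) 1 ?_ had₁ f₅ _ _ f₅a f₅x
    intro h
    apply mul_ne_zero hF2 hF2
    linear_combination -h
  have half : ∀ (B : Type) [Ring B] [Algebra F B], (2⁻¹ : F) • ((1 : B) + 1) = 1 := by
    intro B _ _
    rw [smul_add, ← add_smul]
    have : (2⁻¹ : F) + 2⁻¹ = 1 := by field_simp; norm_num
    rw [this, one_smul]
  let a := QD32.ra F
  let x := QD32.rx F
  let i : F := 2⁻¹
  have s67 := QD32.prod_surj f₆ f₇ s₆ s₇ (i • (1 + a ^ 8))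
    (by simp only [a, i, map_smul, map_add, map_one, map_pow, f₆a, e28, half])
    (by simp [a, i, f₇a, e48])
  have s57 := QD32.prod_surj f₅ _ s₅ s67 (i • (1 + a ^ 8) * i • (1 + a ^ 4))
    (by simp only [a, i, map_mul, map_smul, map_add, map_one, map_pow, f₅a, e18, e14, half, mul_one])
    (by simp [a, i, f₇a, e48, f₆a, e28, e24])
  have s47 := QD32.prod_surj f₄ _ (lin f₄) s57
    (i • (1 + a ^ 8) * i • (1 + a ^ 4) * i • (1 + a ^ 2))
    (by
      rw [map_mul, map_mul]
      simp only [a, i, map_smul, map_add, map_one, map_pow, f₄a]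
      norm_num [hF2])
    (by simp [a, i, f₇a, e48, f₆a, e28, e24, f₅a, e18, e14, e12])
  have s37 := QD32.prod_surj f₃ _ (lin f₃) s47
    (i • (1 + a ^ 8) * i • (1 + a ^ 4) * i • (1 + a ^ 2) * i • (1 + x))
    (by
      rw [map_mul, map_mul, map_mul]
      simp only [a, x, i, map_smul, map_add, map_one, map_pow, f₃a, f₃x]
      norm_num [hF2])
    (by simp [a, x, i, f₇a, e48, f₆a, e28, e24, f₅a, e18, e14, e12, f₄x])
  have s27 := QD32.prod_surj f₂ _ (lin f₂) s37
    (i • (1 + a ^ 8) * i • (1 + a ^ 4) * i • (1 + a ^ 2) * i • (1 + a))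
    (by
      rw [map_mul, map_mul, map_mul]
      simp only [a, i, map_smul, map_add, map_one, map_pow, f₂a]
      norm_num [hF2])
    (by simp [a, i, f₇a, e48, f₆a, e28, e24, f₅a, e18, e14, e12, f₄a, f₃a])
  have s17 := QD32.prod_surj f₁ _ (lin f₁) s27
    (i • (1 + a ^ 8) * i • (1 + a ^ 4) * i • (1 + a ^ 2) * i • (1 + a) * i • (1 + x))
    (by
      rw [map_mul, map_mul, map_mul, map_mul]
      simp only [a, x, i, map_smul, map_add, map_one, map_pow, f₁a, f₁x]
      norm_num [hF2])
    (by simp [a, x, i, f₇a, e48, f₆a, e28, e24, f₅a, e18, e14, e12, f₄a, f₃a, f₂x])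
  have r₂ : Module.finrank F K₂ = 2 := by
    have := Module.card_eq_pow_finrank (K := F) (V := K₂)
    rw [hK₂] at this
    exact (Nat.pow_right_injective Fintype.one_lt_card this).symm
  have r₄ : Module.finrank F K₄ = 4 := by
    have := Module.card_eq_pow_finrank (K := F) (V := K₄)
    rw [hK₄] at this
    exact (Nat.pow_right_injective Fintype.one_lt_card this).symm
  have hdim : Module.finrank F (F × F × F × F × Matrix (Fin 2) (Fin 2) F ×
      Matrix (Fin 2) (Fin 2) K₂ × Matrix (Fin 2) (Fin 2) K₄) = 32 := by
    simp [Module.finrank_prod, Module.finrank_matrix, r₂, r₄]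
  let Φ := f₁.prod (f₂.prod (f₃.prod (f₄.prod (f₅.prod (f₆.prod f₇)))))
  have hΦ : Function.Surjective Φ.toLinearMap := s17
  have hle := QD32.finrank_le F
  have hge := LinearMap.finrank_le_finrank_of_surjective hΦ
  have hinj : Function.Injective Φ.toLinearMap := by
    rw [LinearMap.injective_iff_surjective_of_finrank_eq_finrank (by omega)]
    exact hΦ
  exact ⟨AlgEquiv.ofBijective Φ ⟨hinj, hΦ⟩⟩
end
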